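/- Let n ≥ m ≥ 2, u, v ∈ A*, a ∈ alph(u) = alph(v), and let u = u_- a u_+ and v = v_- a v_+ be a-left factorizations. If u ⊳_{m,n} v, then u_- ⊳_{m,n-1} v_- (and u_- ⊳_{m-1,n-1} v_- if n = m). If u ⊲_{m,n} v, then u_+ ⊲_{m,n-1} v_+ (and u_+ ⊲_{m-1,n-1} v_+ if n = m). Dually, for the a-right factorizations u = u'_- a u'_+ and v = v'_- a v'_+: if u ⊲_{m,n} v then u'_+ ⊲_{m,n-1} v'_+ (u'_+ ⊲_{m-1,n-1} v'_+ if n = m), and if u ⊳_{m,n} v then u'_- ⊳_{m,n-1} v'_- (u'_- ⊳_{m-1,n-1} v'_- if n = m). -/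

import Mathlib

namespace RankerPaper

variable {A : Type*} [DecidableEq A]

/-- Letters of rankers: `X a` ("next `a` to the right") and `Y a` ("next `a` to the left"). -/
inductive RLetter (A : Type*) where
  | X : A → RLetter A
  | Y : A → RLetter A
  deriving DecidableEq

/-- Least `a`-position of `u` strictly greater than `q` (positions are 1-indexed). -/
def nextOcc (u : List A) (a : A) (q : ℕ) : Option ℕ :=
  ((List.range (u.length + 2)).filter (fun i => decide (q < i ∧ u[i-1]? = some a))).head?

/-- Greatest `a`-position of `u` strictly less than `q` (positions are 1-indexed). -/
def prevOcc (u : List A) (a : A) (q : ℕ) : Option ℕ :=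
  ((List.range (u.length + 2)).filter
    (fun i => decide (1 ≤ i ∧ i < q ∧ u[i-1]? = some a))).getLast?

/-- One evaluation step of a ranker letter from position `q`. -/
def stepR (u : List A) : RLetter A → ℕ → Option ℕ
  | .X a, q => nextOcc u a q
  | .Y a, q => prevOcc u a q

/-- Evaluation of a ranker from position `q`, processing letters left to right. -/
def evalFrom (u : List A) : List (RLetter A) → ℕ → Option ℕ
  | [], q => some q
  | z :: r, q => (stepR u z q).bind (evalFrom u r)

/-- Starting position: `0` for an `X`-letter, `|u|+1` for a `Y`-letter. -/
def startPos (u : List A) : RLetter A → ℕ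
  | .X _ => 0
  | .Y _ => u.length + 1

/-- The position `r(u)` defined by the ranker `r` on `u` (`none` if undefined;
empty rankers are considered undefined, rankers being nonempty words). -/
def evalR (u : List A) (r : List (RLetter A)) : Option ℕ :=
  match r with
  | [] => none
  | z :: t => evalFrom u (z :: t) (startPos u z)

/-- `r` is defined on `u`. -/
def Defined (u : List A) (r : List (RLetter A)) : Prop := (evalR u r).isSome

/-- The position `r(u)` (defaulting to `0` when undefined). -/
def pos (u : List A) (r : List (RLetter A)) : ℕ := (evalR u r).getD 0

/-- Do two ranker letters have the same direction? -/
def sameDir : RLetter A → RLetter A → Bool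
  | .X _, .X _ => true
  | .Y _, .Y _ => true
  | _, _ => false

/-- Number of (alternating) blocks of a ranker. -/
def numBlocks : List (RLetter A) → ℕ
  | [] => 0
  | [_] => 1
  | z :: w :: t => (if sameDir z w then 0 else 1) + numBlocks (w :: t)

def startsX (r : List (RLetter A)) : Prop := ∃ a t, r = RLetter.X a :: t
def startsY (r : List (RLetter A)) : Prop := ∃ a t, r = RLetter.Y a :: t
def endsX (r : List (RLetter A)) : Prop := ∃ a, r.getLast? = some (RLetter.X a)
def endsY (r : List (RLetter A)) : Prop := ∃ a, r.getLast? = some (RLetter.Y a)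

/-- `R^X_{m,n}`: rankers with exactly `m` blocks, depth `n`, starting with an `X`-block. -/
def RX (m n : ℕ) (r : List (RLetter A)) : Prop :=
  numBlocks r = m ∧ r.length = n ∧ startsX r

/-- `R^Y_{m,n}`: rankers with exactly `m` blocks, depth `n`, starting with a `Y`-block. -/
def RY (m n : ℕ) (r : List (RLetter A)) : Prop :=
  numBlocks r = m ∧ r.length = n ∧ startsY r

/-- `uR^X_{m,n}`. -/
def uRX (m n : ℕ) (r : List (RLetter A)) : Prop :=
  (∃ m' n', m' ≤ m ∧ n' ≤ n ∧ RX m' n' r) ∨ (∃ m' n', m' < m ∧ n' < n ∧ RY m' n' r)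

/-- `uR^Y_{m,n}`. -/
def uRY (m n : ℕ) (r : List (RLetter A)) : Prop :=
  (∃ m' n', m' ≤ m ∧ n' ≤ n ∧ RY m' n' r) ∨ (∃ m' n', m' < m ∧ n' < n ∧ RX m' n' r)

/-- `uR_{m,n} = uR^X_{m,n} ∪ uR^Y_{m,n}`. -/
def uR (m n : ℕ) (r : List (RLetter A)) : Prop := uRX m n r ∨ uRY m n r

/-- `uR^X_m = ∪_{n ≥ m} uR^X_{m,n}`. -/
def uRXm (m : ℕ) (r : List (RLetter A)) : Prop := ∃ n, m ≤ n ∧ uRX m n r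

/-- `uR^Y_m = ∪_{n ≥ m} uR^Y_{m,n}`. -/
def uRYm (m : ℕ) (r : List (RLetter A)) : Prop := ∃ n, m ≤ n ∧ uRY m n r

/-- `r = Z₁ ⋯ Z_n` is condensed on `u`: it is defined on `u` and there is a chain of
open intervals `(0;|u|+1) = (i₀;j₀) ⊃ (i₁;j₁) ⊃ ⋯ ⊃ (i_{n-1};j_{n-1}) ∋ r(u)`
updated according to the pairs `Z_ℓ Z_{ℓ+1}`. -/
def Condensed (u : List A) (r : List (RLetter A)) : Prop :=
  ∃ (p : ℕ) (i j : ℕ → ℕ),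
    evalR u r = some p ∧
    i 0 = 0 ∧ j 0 = u.length + 1 ∧
    (∀ ℓ a b, 1 ≤ ℓ → r[ℓ-1]? = some (RLetter.X a) → r[ℓ]? = some (RLetter.X b) →
        nextOcc u a (i (ℓ-1)) = some (i ℓ) ∧ j ℓ = j (ℓ-1)) ∧
    (∀ ℓ a b, 1 ≤ ℓ → r[ℓ-1]? = some (RLetter.Y a) → r[ℓ]? = some (RLetter.Y b) →
        i ℓ = i (ℓ-1) ∧ prevOcc u a (j (ℓ-1)) = some (j ℓ)) ∧
    (∀ ℓ a b, 1 ≤ ℓ → r[ℓ-1]? = some (RLetter.X a) → r[ℓ]? = some (RLetter.Y b) →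
        i ℓ = i (ℓ-1) ∧ nextOcc u a (i (ℓ-1)) = some (j ℓ)) ∧
    (∀ ℓ a b, 1 ≤ ℓ → r[ℓ-1]? = some (RLetter.Y a) → r[ℓ]? = some (RLetter.X b) →
        prevOcc u a (j (ℓ-1)) = some (i ℓ) ∧ j ℓ = j (ℓ-1)) ∧
    (∀ ℓ, 1 ≤ ℓ → ℓ < r.length →
        i (ℓ-1) ≤ i ℓ ∧ j ℓ ≤ j (ℓ-1) ∧ (i (ℓ-1) < i ℓ ∨ j ℓ < j (ℓ-1))) ∧
    i (r.length - 1) < p ∧ p < j (r.length - 1)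

/-- `u` and `v` agree on rankers from the set `R`. -/
def AgreeDef (R : List (RLetter A) → Prop) (u v : List A) : Prop :=
  ∀ r, R r → (Defined u r ↔ Defined v r)

/-- `u` and `v` agree on condensed rankers from the set `R`. -/
def AgreeCond (R : List (RLetter A) → Prop) (u v : List A) : Prop :=
  ∀ r, R r → (Condensed u r ↔ Condensed v r)

/-- `u ⊳_{m,n} v`. -/
def trir (m n : ℕ) (u v : List A) : Prop := AgreeCond (uRX m n) u v

/-- `u ⊲_{m,n} v`. -/
def tril (m n : ℕ) (u v : List A) : Prop := AgreeCond (uRY m n) u v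

/-- The alphabet (set of letters) of a word. -/
def alph (u : List A) : Finset A := u.toFinset

/-- Condition (WI 1). -/
def WI1 (m n : ℕ) (u v : List A) : Prop := AgreeDef (uR m n) u v

/-- Condition (WI 2). -/
def WI2 (m n : ℕ) (u v : List A) : Prop :=
  ∀ r r', uR m n r → uR (m-1) (n-1) r' →
    Defined u r → Defined v r → Defined u r' → Defined v r' →
    compare (pos u r) (pos u r') = compare (pos v r) (pos v r')

/-- Condition (WI 3). -/
def WI3 (m n : ℕ) (u v : List A) : Prop :=
  ∀ r r', uR m n r → uR m (n-1) r' →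
    ((endsX r ∧ endsY r') ∨ (endsY r ∧ endsX r')) →
    Defined u r → Defined v r → Defined u r' → Defined v r' →
    compare (pos u r) (pos u r') = compare (pos v r) (pos v r')

/-- Condition (WI 1c). -/
def WI1c (m n : ℕ) (u v : List A) : Prop := AgreeCond (uR m n) u v

/-- Condition (WI 2c). -/
def WI2c (m n : ℕ) (u v : List A) : Prop :=
  ∀ r r', uR m n r → uR (m-1) (n-1) r' →
    Condensed u r → Condensed v r → Condensed u r' → Condensed v r' →
    compare (pos u r) (pos u r') = compare (pos v r) (pos v r')

/-- Condition (WI 3c). -/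
def WI3c (m n : ℕ) (u v : List A) : Prop :=
  ∀ r r', uR m n r → uR m (n-1) r' →
    ((endsX r ∧ endsY r') ∨ (endsY r ∧ endsX r')) →
    Condensed u r → Condensed v r → Condensed u r' → Condensed v r' →
    compare (pos u r) (pos u r') = compare (pos v r) (pos v r')


/-- does the list start with an X-letter -/
def headX : List (RLetter A) → Bool
  | RLetter.X _ :: _ => true
  | _ => false

def Fst (f : ℤ → Option A) (i j : ℤ) (a : A) (p : ℤ) : Prop :=
  i < p ∧ p < j ∧ f p = some a ∧ ∀ q, i < q → q < p → f q ≠ some a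

def Lst (f : ℤ → Option A) (i j : ℤ) (a : A) (p : ℤ) : Prop :=
  i < p ∧ p < j ∧ f p = some a ∧ ∀ q, p < q → q < j → f q ≠ some a

def Sel (f : ℤ → Option A) (i j : ℤ) : RLetter A → ℤ → Prop
  | .X a, p => Fst f i j a p
  | .Y a, p => Lst f i j a p

def D (f : ℤ → Option A) : List (RLetter A) → ℤ → ℤ → Prop
  | [], _, _ => True
  | z :: t, i, j => ∃ p, Sel f i j z p ∧
      D f t (if headX t then p else i) (if headX t then j else p)

omit [DecidableEq A] in
theorem Sel.bd {f : ℤ → Option A} {i j : ℤ} {z : RLetter A} {p : ℤ} (h : Sel f i j z p) :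
    i < p ∧ p < j := by
  cases z <;> exact ⟨h.1, h.2.1⟩

omit [DecidableEq A] in
theorem Fst.uniq {f : ℤ → Option A} {i j k : ℤ} {a : A} {p q : ℤ} (h : Fst f i j a p)
    (h' : Fst f i k a q) : p = q := by
  rcases lt_trichotomy p q with h1 | h1 | h1
  · exact absurd h.2.2.1 (h'.2.2.2 p h.1 h1)
  · exact h1
  · exact absurd h'.2.2.1 (h.2.2.2 q h'.1 h1)

def lab (u : List A) (x : ℤ) : Option A := if 0 < x then u[x.toNat - 1]? else none

def sw : RLetter A → RLetter A
  | .X a => .Y a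
  | .Y a => .X a

omit [DecidableEq A] in
theorem D_shift (f g : ℤ → Option A) (s : ℤ) (r : List (RLetter A)) : ∀ i j : ℤ,
    (∀ x, i < x → x < j → f x = g (x + s)) → D f r i j → D g r (i + s) (j + s) := by
  induction r with
  | nil => intros; trivial
  | cons z t ih =>
    intro i j h ⟨p, hp, hd⟩
    have hb := hp.bd
    refine ⟨p + s, ?_, ?_⟩
    · cases z with
      | X a =>
        refine ⟨by linarith [hb.1], by linarith [hb.2], ?_, ?_⟩
        · rw [← h p hb.1 hb.2]; exact hp.2.2.1
        · intro q h1 h2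
          have := h (q - s) (by linarith) (by linarith [hb.2])
          rw [sub_add_cancel] at this
          rw [← this]; exact hp.2.2.2 _ (by linarith) (by linarith)
      | Y a =>
        refine ⟨by linarith [hb.1], by linarith [hb.2], ?_, ?_⟩
        · rw [← h p hb.1 hb.2]; exact hp.2.2.1
        · intro q h1 h2
          have := h (q - s) (by linarith [hb.1]) (by linarith)
          rw [sub_add_cancel] at this
          rw [← this]; exact hp.2.2.2 _ (by linarith) (by linarith)
    · have := ih _ _ (fun x h1 h2 => h x ?_ ?_) hd
      · convert this using 1 <;> split_ifs <;> rfl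
      · split_ifs at h1 <;> linarith
      · split_ifs at h2 <;> linarith

omit [DecidableEq A] in
theorem D_shift_iff (f g : ℤ → Option A) (s : ℤ) (r : List (RLetter A)) (i j : ℤ)
    (h : ∀ x, i < x → x < j → f x = g (x + s)) : D f r i j ↔ D g r (i + s) (j + s) := by
  refine ⟨D_shift f g s r i j h, fun hd => ?_⟩
  have := D_shift g f (-s) r (i + s) (j + s) (fun x h1 h2 => ?_) hd
  · simpa using this
  · have := h (x + -s) (by linarith) (by linarith)
    rw [this]; simp

omit [DecidableEq A] in
theorem D_refl (f : ℤ → Option A) (r : List (RLetter A)) : ∀ i j : ℤ,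
    D f r i j → D (fun x => f (-x)) (r.map sw) (-j) (-i) := by
  induction r with
  | nil => intros; trivial
  | cons z t ih =>
    intro i j ⟨p, hp, hd⟩
    have hb := hp.bd
    refine ⟨-p, ?_, ?_⟩
    · cases z with
      | X a =>
        refine ⟨by linarith [hb.1], by linarith [hb.2], by simpa using hp.2.2.1, ?_⟩
        intro q h1 h2
        exact hp.2.2.2 _ (by linarith) (by linarith)
      | Y a =>
        refine ⟨by linarith [hb.1], by linarith [hb.2], by simpa using hp.2.2.1, ?_⟩
        intro q h1 h2
        exact hp.2.2.2 _ (by linarith) (by linarith)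
    · have := ih _ _ hd
      match t, this with
      | [], _ => trivial
      | .X a :: t, this => simpa [headX, sw] using this
      | .Y a :: t, this => simpa [headX, sw] using this

omit [DecidableEq A] in
theorem sw_sw (r : List (RLetter A)) : (r.map sw).map sw = r := by
  induction r with
  | nil => rfl
  | cons z t ih => cases z <;> simp [sw, ih]

omit [DecidableEq A] in
theorem D_refl_iff (f : ℤ → Option A) (r : List (RLetter A)) (i j : ℤ) :
    D (fun x => f (-x)) r (-j) (-i) ↔ D f (r.map sw) i j := by
  constructor
  · intro h
    have := D_refl _ _ _ _ h
    simpa using this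
  · intro h
    have := D_refl _ _ _ _ h
    rwa [sw_sw] at this

omit [DecidableEq A] in
theorem nb_sw (r : List (RLetter A)) : numBlocks (r.map sw) = numBlocks r := by
  induction r with
  | nil => rfl
  | cons z t ih =>
    cases t with
    | nil => rfl
    | cons w t =>
      simp only [List.map_cons, numBlocks] at ih ⊢
      rw [ih]
      cases z <;> cases w <;> rfl

omit [DecidableEq A] in
theorem startsX_iff (r : List (RLetter A)) : startsX r ↔ headX r = true := by
  unfold startsX
  match r with
  | [] => simp [headX]
  | .X a :: t => simp [headX]
  | .Y a :: t => simp [headX]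

omit [DecidableEq A] in
theorem startsY_iff (r : List (RLetter A)) : startsY r ↔ (r ≠ [] ∧ headX r = false) := by
  unfold startsY
  match r with
  | [] => simp [headX]
  | .X a :: t => simp [headX]
  | .Y a :: t => simp [headX]

omit [DecidableEq A] in
theorem uRX_iff (m n : ℕ) (r : List (RLetter A)) : uRX m n r ↔
    ((numBlocks r ≤ m ∧ r.length ≤ n ∧ startsX r) ∨
      (numBlocks r < m ∧ r.length < n ∧ startsY r)) := by
  unfold uRX RX RY
  constructor
  · rintro (⟨_, _, h1, h2, rfl, rfl, h⟩ | ⟨_, _, h1, h2, rfl, rfl, h⟩)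
    · exact Or.inl ⟨h1, h2, h⟩
    · exact Or.inr ⟨h1, h2, h⟩
  · rintro (⟨h1, h2, h⟩ | ⟨h1, h2, h⟩)
    · exact Or.inl ⟨_, _, h1, h2, rfl, rfl, h⟩
    · exact Or.inr ⟨_, _, h1, h2, rfl, rfl, h⟩

omit [DecidableEq A] in
theorem uRY_iff (m n : ℕ) (r : List (RLetter A)) : uRY m n r ↔
    ((numBlocks r ≤ m ∧ r.length ≤ n ∧ startsY r) ∨
      (numBlocks r < m ∧ r.length < n ∧ startsX r)) := by
  unfold uRY RX RY
  constructor
  · rintro (⟨_, _, h1, h2, rfl, rfl, h⟩ | ⟨_, _, h1, h2, rfl, rfl, h⟩)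
    · exact Or.inl ⟨h1, h2, h⟩
    · exact Or.inr ⟨h1, h2, h⟩
  · rintro (⟨h1, h2, h⟩ | ⟨h1, h2, h⟩)
    · exact Or.inl ⟨_, _, h1, h2, rfl, rfl, h⟩
    · exact Or.inr ⟨_, _, h1, h2, rfl, rfl, h⟩

omit [DecidableEq A] in
theorem startsX_sw (r : List (RLetter A)) : startsX (r.map sw) ↔ startsY r := by
  rw [startsX_iff, startsY_iff]
  match r with
  | [] => simp [headX]
  | .X a :: t => simp [headX, sw]
  | .Y a :: t => simp [headX, sw]

omit [DecidableEq A] in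
theorem uRX_sw (m n : ℕ) (r : List (RLetter A)) : uRX m n (r.map sw) ↔ uRY m n r := by
  have h := startsX_sw (r.map sw)
  rw [sw_sw] at h
  rw [uRX_iff, uRY_iff, nb_sw, startsX_sw, ← h, List.length_map]

omit [DecidableEq A] in
theorem uRY_sw (m n : ℕ) (r : List (RLetter A)) : uRY m n (r.map sw) ↔ uRX m n r := by
  have h := uRX_sw m n (r.map sw)
  rw [sw_sw] at h
  exact h.symm

omit [DecidableEq A] in
theorem uRX_mono (m n : ℕ) (r : List (RLetter A)) (h : uRX (m-1) n r) : uRX m n r := by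
  rw [uRX_iff] at h ⊢
  rcases h with ⟨h1, h2, h⟩ | ⟨h1, h2, h⟩
  · exact Or.inl ⟨by omega, h2, h⟩
  · exact Or.inr ⟨by omega, h2, h⟩

omit [DecidableEq A] in
theorem uRY_mono (m n : ℕ) (r : List (RLetter A)) (h : uRY (m-1) n r) : uRY m n r := by
  rw [uRY_iff] at h ⊢
  rcases h with ⟨h1, h2, h⟩ | ⟨h1, h2, h⟩
  · exact Or.inl ⟨by omega, h2, h⟩
  · exact Or.inr ⟨by omega, h2, h⟩

omit [DecidableEq A] in
theorem nb_X (s : List A) (b a : A) :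
    numBlocks (s.map RLetter.X ++ [RLetter.X b, RLetter.Y a]) = 2 := by
  induction s with
  | nil => rfl
  | cons c s ih => cases s <;> simpa [numBlocks, sameDir] using ih

omit [DecidableEq A] in
theorem nb_Y (s : List A) (a : A) :
    numBlocks (s.map RLetter.Y ++ [RLetter.Y a]) = 1 := by
  induction s with
  | nil => rfl
  | cons c s ih => cases s <;> simpa [numBlocks, sameDir] using ih

omit [DecidableEq A] in
theorem nb_XY (a : A) (r : List (RLetter A)) (h : startsY r) :
    numBlocks (RLetter.X a :: r) = numBlocks r + 1 := by
  obtain ⟨b, t, rfl⟩ := h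
  simp [numBlocks, sameDir, add_comm]

omit [DecidableEq A] in
theorem nb_XX (a : A) (r : List (RLetter A)) (h : startsX r) :
    numBlocks (RLetter.X a :: r) = numBlocks r := by
  obtain ⟨b, t, rfl⟩ := h
  simp [numBlocks, sameDir]

omit [DecidableEq A] in
theorem D_X (f : ℤ → Option A) (a : A) (i j p : ℤ) (h : Fst f i j a p) (r : List (RLetter A)) :
    D f (RLetter.X a :: r) i j ↔ D f r (if headX r then p else i) (if headX r then j else p) := by
  constructor
  · rintro ⟨q, hq, hd⟩
    rw [Fst.uniq h hq]; exact hd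
  · intro hd
    exact ⟨p, h, hd⟩

omit [DecidableEq A] in
theorem lemB (f : ℤ → Option A) (a : A) (j p : ℤ) (r : List (RLetter A)) : ∀ i,
    Fst f i j a p → startsX r →
    (D f r i p ↔ (D f r i j ∧ ∀ (s : List A) (b : A), s.map RLetter.X ++ [RLetter.X b] <+: r →
      b ≠ a ∧ ¬ D f (s.map RLetter.X ++ [RLetter.X b, RLetter.Y a]) i j)) := by
  induction r with
  | nil => rintro i - ⟨b, t, h⟩; cases h
  | cons z t ih =>
    rintro i hp ⟨b, t', h⟩
    cases h
    -- base witness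
    have key : ∀ q, Fst f i j b q → b ≠ a →
        ¬ D f [RLetter.X b, RLetter.Y a] i j → q < p := by
      intro q hq hne hn
      by_contra hle
      have hqp : p ≠ q := by
        rintro rfl
        have := hp.2.2.1.symm.trans hq.2.2.1
        exact hne (by simpa using this.symm)
      have hlt : p < q := lt_of_le_of_ne (not_lt.mp hle) hqp
      apply hn
      rw [D_X f b i j q hq]
      simp only [headX, D, Bool.false_eq_true, if_false]
      -- last a before q
      obtain ⟨x, hx, hmax⟩ := Int.exists_greatest_of_bdd
        (P := fun x => i < x ∧ x < q ∧ f x = some a) ⟨q, fun z hz => hz.2.1.le⟩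
        ⟨p, hp.1, hlt, hp.2.2.1⟩
      refine ⟨x, ⟨hx.1, hx.2.1, hx.2.2, ?_⟩, trivial⟩
      intro y h1 h2 h3
      exact absurd (hmax y ⟨hx.1.trans h1, h2, h3⟩) (not_le.mpr h1)
    have ext : ∀ q, Fst f i p b q → Fst f i j b q :=
      fun q hq => ⟨hq.1, hq.2.1.trans hp.2.1, hq.2.2⟩
    have first : ∀ q, Fst f i p b q → b ≠ a ∧ ¬ D f [RLetter.X b, RLetter.Y a] i j := by
      intro q hq
      constructor
      · rintro rfl
        exact hp.2.2.2 q hq.1 hq.2.1 hq.2.2.1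
      · rw [D_X f b i j q (ext q hq)]
        simp only [headX, D, Bool.false_eq_true, if_false]
        rintro ⟨x, hx, -⟩
        exact hp.2.2.2 x hx.1 (hx.2.1.trans hq.2.1) hx.2.2.1
    by_cases hX : startsX t
    · have hh : headX t = true := (startsX_iff t).1 hX
      constructor
      · rintro ⟨q, hq, hd⟩
        simp only [hh, if_true] at hd
        have hpq : Fst f q j a p := ⟨hq.2.1, hp.2.1, hp.2.2.1, fun y h1 h2 =>
          hp.2.2.2 y (lt_trans hq.1 h1) h2⟩
        obtain ⟨h1, h2⟩ := (ih q hpq hX).1 hd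
        refine ⟨⟨q, ext q hq, by simpa only [hh, if_true] using h1⟩, ?_⟩
        intro s c hs
        cases s with
        | nil =>
          have : c = b := by simpa using hs
          subst this
          exact first q hq
        | cons d s =>
          simp only [List.map_cons, List.cons_append, List.cons_prefix_cons] at hs
          obtain ⟨h3, h4⟩ := hs
          cases h3
          refine ⟨(h2 s c h4).1, ?_⟩
          simp only [List.map_cons, List.cons_append]
          rw [D_X f _ i j q (ext q hq)]
          have : headX (s.map RLetter.X ++ [RLetter.X c, RLetter.Y a]) = true := by
            cases s <;> rfl
          simp only [this, if_true]
          exact (h2 s c h4).2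
      · rintro ⟨⟨q, hq, hd⟩, hall⟩
        simp only [hh, if_true] at hd
        have h0 := hall [] b (by simp)
        have hqp := key q hq h0.1 h0.2
        have hpq : Fst f q j a p := ⟨hqp, hp.2.1, hp.2.2.1, fun y h1 h2 =>
          hp.2.2.2 y (lt_trans hq.1 h1) h2⟩
        refine ⟨q, ⟨hq.1, hqp, hq.2.2⟩, ?_⟩
        simp only [hh, if_true]
        refine (ih q hpq hX).2 ⟨hd, fun s c hs => ?_⟩
        have := hall (b :: s) c (by simpa using hs)
        refine ⟨this.1, ?_⟩
        have h3 := this.2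
        simp only [List.map_cons, List.cons_append] at h3
        rw [D_X f b i j q hq] at h3
        have : headX (s.map RLetter.X ++ [RLetter.X c, RLetter.Y a]) = true := by
          cases s <;> rfl
        simpa only [this, if_true] using h3
    · have hh : headX t = false := by
        rw [startsX_iff] at hX; simpa using hX
      constructor
      · rintro ⟨q, hq, hd⟩
        simp only [hh, Bool.false_eq_true, if_false] at hd
        refine ⟨⟨q, ext q hq, by simpa only [hh, Bool.false_eq_true, if_false] using hd⟩, ?_⟩
        intro s c hs
        cases s with
        | nil =>
          have : c = b := by simpa using hs
          subst this
          exact first q hq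
        | cons d s =>
          simp only [List.map_cons, List.cons_append, List.cons_prefix_cons] at hs
          obtain ⟨w, hw⟩ := hs.2
          exfalso; apply hX
          rw [← hw]
          cases s
          · exact ⟨_, _, rfl⟩
          · exact ⟨_, _, rfl⟩
      · rintro ⟨⟨q, hq, hd⟩, hall⟩
        have h0 := hall [] b (by simp)
        have hqp := key q hq h0.1 h0.2
        refine ⟨q, ⟨hq.1, hqp, hq.2.2⟩, ?_⟩
        simpa only [hh, Bool.false_eq_true, if_false] using hd

omit [DecidableEq A] in
theorem Lst.uniq {f : ℤ → Option A} {i j k : ℤ} {a : A} {p q : ℤ} (h : Lst f i j a p)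
    (h' : Lst f k j a q) : p = q := by
  rcases lt_trichotomy p q with h1 | h1 | h1
  · exact absurd h'.2.2.1 (h.2.2.2 q h1 h'.2.1)
  · exact h1
  · exact absurd h.2.2.1 (h'.2.2.2 p h1 h.2.1)

omit [DecidableEq A] in
theorem D_Y (f : ℤ → Option A) (a : A) (i j p : ℤ) (h : Lst f i j a p) (r : List (RLetter A)) :
    D f (RLetter.Y a :: r) i j ↔ D f r (if headX r then p else i) (if headX r then j else p) := by
  constructor
  · rintro ⟨q, hq, hd⟩
    rw [Lst.uniq h hq]; exact hd
  · intro hd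
    exact ⟨p, h, hd⟩

omit [DecidableEq A] in
theorem lemC (f : ℤ → Option A) (a : A) (i p : ℤ) (r : List (RLetter A)) : ∀ j,
    Fst f i j a p → startsY r →
    (D f r p j ↔ (D f r i j ∧ ∀ (s : List A) (b : A), s.map RLetter.Y ++ [RLetter.Y b] <+: r →
      D f (s.map RLetter.Y ++ [RLetter.Y b, RLetter.Y a]) i j)) := by
  induction r with
  | nil => rintro i - ⟨b, t, h⟩; cases h
  | cons z t ih =>
    rintro j hp ⟨b, t', h⟩
    cases h
    have key : ∀ q, Lst f i j b q → D f [RLetter.Y b, RLetter.Y a] i j → p < q := by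
      intro q hq hn
      rw [D_Y f b i j q hq] at hn
      simp only [headX, D, Bool.false_eq_true, if_false] at hn
      obtain ⟨x, hx, -⟩ := hn
      by_contra hle
      exact hp.2.2.2 x hx.1 (lt_of_lt_of_le hx.2.1 (not_lt.1 hle)) hx.2.2.1
    have ext : ∀ q, Lst f p j b q → Lst f i j b q :=
      fun q hq => ⟨hp.1.trans hq.1, hq.2⟩
    have first : ∀ q, Lst f p j b q → D f [RLetter.Y b, RLetter.Y a] i j := by
      intro q hq
      rw [D_Y f b i j q (ext q hq)]
      simp only [headX, D, Bool.false_eq_true, if_false]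
      obtain ⟨x, hx, hmax⟩ := Int.exists_greatest_of_bdd
        (P := fun x => i < x ∧ x < q ∧ f x = some a) ⟨q, fun z hz => hz.2.1.le⟩
        ⟨p, hp.1, hq.1, hp.2.2.1⟩
      refine ⟨x, ⟨hx.1, hx.2.1, hx.2.2, ?_⟩, trivial⟩
      intro y h1 h2 h3
      exact absurd (hmax y ⟨hx.1.trans h1, h2, h3⟩) (not_le.mpr h1)
    by_cases hY : startsY t
    · have hh : headX t = false := ((startsY_iff t).1 hY).2
      have hs' : ∀ (s : List A) (c : A),
          headX (s.map RLetter.Y ++ [RLetter.Y c, RLetter.Y a]) = false := by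
        intro s c; cases s <;> rfl
      constructor
      · rintro ⟨q, hq, hd⟩
        simp only [hh, Bool.false_eq_true, if_false] at hd
        have hpq : Fst f i q a p := ⟨hp.1, hq.1, hp.2.2⟩
        obtain ⟨h1, h2⟩ := (ih q hpq hY).1 hd
        refine ⟨⟨q, ext q hq, by simpa only [hh, Bool.false_eq_true, if_false] using h1⟩, ?_⟩
        intro s c hs
        cases s with
        | nil =>
          have : c = b := by simpa using hs
          subst this
          exact first q hq
        | cons d s =>
          simp only [List.map_cons, List.cons_append, List.cons_prefix_cons] at hs
          obtain ⟨h3, h4⟩ := hs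
          cases h3
          simp only [List.map_cons, List.cons_append]
          rw [D_Y f _ i j q (ext q hq)]
          simp only [hs', Bool.false_eq_true, if_false]
          exact h2 s c h4
      · rintro ⟨⟨q, hq, hd⟩, hall⟩
        simp only [hh, Bool.false_eq_true, if_false] at hd
        have h0 := hall [] b (by simp)
        have hqp := key q hq h0
        have hpq : Fst f i q a p := ⟨hp.1, hqp, hp.2.2⟩
        refine ⟨q, ⟨hqp, hq.2⟩, ?_⟩
        simp only [hh, Bool.false_eq_true, if_false]
        refine (ih q hpq hY).2 ⟨hd, fun s c hs => ?_⟩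
        have h3 := hall (b :: s) c (by simpa using hs)
        simp only [List.map_cons, List.cons_append] at h3
        rw [D_Y f b i j q hq] at h3
        simpa only [hs', Bool.false_eq_true, if_false] using h3
    · have hh : t = [] ∨ headX t = true := by
        rw [startsY_iff] at hY
        by_cases h : t = []
        · exact Or.inl h
        · right; simpa [h] using hY
      have hDD : ∀ q k l, D f t (if headX t then q else k) (if headX t then j else q) →
          D f t (if headX t then q else l) (if headX t then j else q) := by
        intro q k l h
        rcases hh with rfl | hh
        · trivial
        · simpa only [hh, if_true] using h
      constructor
      · rintro ⟨q, hq, hd⟩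
        refine ⟨⟨q, ext q hq, hDD _ _ _ hd⟩, ?_⟩
        intro s c hs
        cases s with
        | nil =>
          have : c = b := by simpa using hs
          subst this
          exact first q hq
        | cons d s =>
          simp only [List.map_cons, List.cons_append, List.cons_prefix_cons] at hs
          obtain ⟨w, hw⟩ := hs.2
          exfalso; apply hY
          rw [← hw]
          cases s
          · exact ⟨_, _, rfl⟩
          · exact ⟨_, _, rfl⟩
      · rintro ⟨⟨q, hq, hd⟩, hall⟩
        have h0 := hall [] b (by simp)
        exact ⟨q, ⟨key q hq h0, hq.2⟩, hDD _ _ _ hd⟩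

omit [DecidableEq A] in
theorem agree1 (m n : ℕ) (hm : 2 ≤ m) (hmn : m ≤ n) (f g : ℤ → Option A) (a : A)
    (i j p i' j' p' : ℤ) (hp : Fst f i j a p) (hp' : Fst g i' j' a p')
    (H : ∀ r, uRX m n r → (D f r i j ↔ D g r i' j')) :
    ∀ r, uRX m (n-1) r → (D f r i p ↔ D g r i' p') := by
  intro r hr
  rw [uRX_iff] at hr
  rcases hr with ⟨h1, h2, h3⟩ | ⟨h1, h2, h3⟩
  · rw [lemB f a j p r i hp h3, lemB g a j' p' r i' hp' h3]
    refine and_congr (H r ((uRX_iff _ _ _).2 (Or.inl ⟨h1, by omega, h3⟩))) ?_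
    refine forall_congr' fun s => forall_congr' fun b => ?_
    refine forall_congr' fun hs => and_congr Iff.rfl (not_congr (H _ ?_))
    rw [uRX_iff]
    left
    have := hs.length_le
    simp only [List.length_append, List.length_map, List.length_cons, List.length_nil] at this
    refine ⟨by rw [nb_X]; exact hm, ?_, ?_⟩
    · simp only [List.length_append, List.length_map, List.length_cons, List.length_nil]
      omega
    · cases s <;> exact ⟨_, _, rfl⟩
  · have hh : headX r = false := ((startsY_iff r).1 h3).2
    have := H (RLetter.X a :: r) ?_
    · rw [D_X f a i j p hp, D_X g a i' j' p' hp'] at this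
      simpa only [hh, Bool.false_eq_true, if_false] using this
    · rw [uRX_iff]
      left
      refine ⟨by rw [nb_XY a r h3]; omega, ?_, ⟨_, _, rfl⟩⟩
      simp only [List.length_cons]; omega

omit [DecidableEq A] in
theorem agree2 (m n : ℕ) (hm : 2 ≤ m) (hmn : m ≤ n) (f g : ℤ → Option A) (a : A)
    (i j p i' j' p' : ℤ) (hp : Fst f i j a p) (hp' : Fst g i' j' a p')
    (H : ∀ r, uRY m n r → (D f r i j ↔ D g r i' j')) :
    ∀ r, uRY m (n-1) r → (D f r p j ↔ D g r p' j') := by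
  intro r hr
  rw [uRY_iff] at hr
  rcases hr with ⟨h1, h2, h3⟩ | ⟨h1, h2, h3⟩
  · rw [lemC f a i p r j hp h3, lemC g a i' p' r j' hp' h3]
    refine and_congr (H r ((uRY_iff _ _ _).2 (Or.inl ⟨h1, by omega, h3⟩))) ?_
    refine forall_congr' fun s => forall_congr' fun b => ?_
    refine forall_congr' fun hs => H _ ?_
    rw [uRY_iff]
    left
    have := hs.length_le
    simp only [List.length_append, List.length_map, List.length_cons, List.length_nil] at this
    refine ⟨?_, ?_, ?_⟩
    · have := nb_Y (s ++ [b]) a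
      simp only [List.map_append, List.map_cons, List.map_nil, List.append_assoc,
        List.cons_append, List.nil_append] at this
      rw [this]; omega
    · simp only [List.length_append, List.length_map, List.length_cons, List.length_nil]
      omega
    · cases s <;> exact ⟨_, _, rfl⟩
  · have hh : headX r = true := (startsX_iff r).1 h3
    have := H (RLetter.X a :: r) ?_
    · rw [D_X f a i j p hp, D_X g a i' j' p' hp'] at this
      simpa only [hh, if_true] using this
    · rw [uRY_iff]
      right
      refine ⟨by rw [nb_XX a r h3]; omega, ?_, ⟨_, _, rfl⟩⟩
      simp only [List.length_cons]; omega

omit [DecidableEq A] in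
theorem Lst.refl' {f : ℤ → Option A} {i j : ℤ} {a : A} {p : ℤ} (h : Lst f i j a p) :
    Fst (fun x => f (-x)) (-j) (-i) a (-p) :=
  ⟨by linarith [h.2.1], by linarith [h.1], by simpa using h.2.2.1,
    fun q h1 h2 => h.2.2.2 _ (by linarith) (by linarith)⟩

omit [DecidableEq A] in
theorem agree3 (m n : ℕ) (hm : 2 ≤ m) (hmn : m ≤ n) (f g : ℤ → Option A) (a : A)
    (i j p i' j' p' : ℤ) (hp : Lst f i j a p) (hp' : Lst g i' j' a p')
    (H : ∀ r, uRY m n r → (D f r i j ↔ D g r i' j')) :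
    ∀ r, uRY m (n-1) r → (D f r p j ↔ D g r p' j') := by
  intro r hr
  have := agree1 m n hm hmn _ _ a _ _ _ _ _ _ hp.refl' hp'.refl' (fun r hr => by
    rw [D_refl_iff, D_refl_iff]
    exact H _ ((uRY_sw _ _ _).2 hr)) (r.map sw) ((uRX_sw _ _ _).2 hr)
  rw [D_refl_iff, D_refl_iff, sw_sw] at this
  exact this

omit [DecidableEq A] in
theorem agree4 (m n : ℕ) (hm : 2 ≤ m) (hmn : m ≤ n) (f g : ℤ → Option A) (a : A)
    (i j p i' j' p' : ℤ) (hp : Lst f i j a p) (hp' : Lst g i' j' a p')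
    (H : ∀ r, uRX m n r → (D f r i j ↔ D g r i' j')) :
    ∀ r, uRX m (n-1) r → (D f r i p ↔ D g r i' p') := by
  intro r hr
  have := agree2 m n hm hmn _ _ a _ _ _ _ _ _ hp.refl' hp'.refl' (fun r hr => by
    rw [D_refl_iff, D_refl_iff]
    exact H _ ((uRX_sw _ _ _).2 hr)) (r.map sw) ((uRY_sw _ _ _).2 hr)
  rw [D_refl_iff, D_refl_iff, sw_sw] at this
  exact this

theorem nextOcc_iff (u : List A) (a : A) (q p : ℕ) : nextOcc u a q = some p ↔
    (q < p ∧ u[p-1]? = some a ∧ ∀ x, q < x → x < p → u[x-1]? ≠ some a) := by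
  unfold nextOcc
  rw [List.head?_filter, List.find?_range_eq_some]
  simp only [decide_eq_true_eq, List.mem_range, Bool.not_eq_true', decide_eq_false_iff_not]
  constructor
  · rintro ⟨⟨h1, h2⟩, h3, h4⟩
    exact ⟨h1, h2, fun x hx hx' hh => h4 x hx' ⟨hx, hh⟩⟩
  · rintro ⟨h1, h2, h4⟩
    refine ⟨⟨h1, h2⟩, ?_, fun x hx hx' => h4 x hx'.1 hx hx'.2⟩
    obtain ⟨h, -⟩ := List.getElem?_eq_some_iff.1 h2
    omega

theorem prevOcc_iff (u : List A) (a : A) (q p : ℕ) : prevOcc u a q = some p ↔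
    (1 ≤ p ∧ p < q ∧ u[p-1]? = some a ∧ ∀ x, p < x → x < q → u[x-1]? ≠ some a) := by
  unfold prevOcc
  have gen : ∀ (N : ℕ) (P : ℕ → Bool), ((List.range N).filter P).getLast? = some p ↔
      (p < N ∧ P p = true ∧ ∀ x, p < x → x < N → P x = false) := by
    intro N P
    induction N with
    | zero => simp
    | succ N ih =>
      rw [List.range_succ, List.filter_append]
      by_cases hP : P N = true
      · simp only [hP, List.filter_cons_of_pos, List.filter_nil, List.getLast?_append,
          List.getLast?_singleton, Option.some_or, Option.some.injEq]
        constructor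
        · rintro rfl
          exact ⟨by omega, hP, fun x h1 h2 => by omega⟩
        · rintro ⟨h1, h2, h3⟩
          by_contra hne
          have := h3 N (by omega) (by omega)
          rw [hP] at this; cases this
      · have hP' : P N = false := by simpa using hP
        simp only [hP', List.filter_cons_of_neg, Bool.false_eq_true, not_false_eq_true,
          List.filter_nil, List.append_nil]
        rw [ih]
        constructor
        · rintro ⟨h1, h2, h3⟩
          refine ⟨by omega, h2, fun x h4 h5 => ?_⟩
          rcases Nat.lt_succ_iff_lt_or_eq.1 h5 with h | rfl
          · exact h3 x h4 h
          · exact hP'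
        · rintro ⟨h1, h2, h3⟩
          refine ⟨?_, h2, fun x h4 h5 => h3 x h4 (by omega)⟩
          rcases Nat.lt_succ_iff_lt_or_eq.1 h1 with h | rfl
          · exact h
          · exact absurd h2 hP
  rw [gen]
  simp only [decide_eq_true_eq, decide_eq_false_iff_not]
  constructor
  · rintro ⟨h0, ⟨h1, h2, h3⟩, h4⟩
    refine ⟨h1, h2, h3, fun x hx hx' hh => h4 x hx ?_ ⟨by omega, hx', hh⟩⟩
    obtain ⟨h, -⟩ := List.getElem?_eq_some_iff.1 hh
    omega
  · rintro ⟨h1, h2, h3, h4⟩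
    refine ⟨?_, ⟨h1, h2, h3⟩, fun x hx _ hx' => h4 x hx hx'.2.1 hx'.2.2⟩
    obtain ⟨h, -⟩ := List.getElem?_eq_some_iff.1 h3
    omega

omit [DecidableEq A] in
theorem lab_pos (u : List A) (x : ℕ) (h : 0 < x) : lab u (x : ℤ) = u[x-1]? := by
  simp [lab, h]

/-- step from the interval -/
def stepI (u : List A) (z : RLetter A) (i j : ℕ) : Option ℕ :=
  match z with
  | .X a => nextOcc u a i
  | .Y a => prevOcc u a j

theorem Sel_iff (u : List A) (z : RLetter A) (i j p : ℕ) :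
    Sel (lab u) i j z p ↔ (stepI u z i j = some p ∧ i < p ∧ p < j) := by
  cases z with
  | X a =>
    simp only [Sel, Fst, stepI, nextOcc_iff]
    constructor
    · rintro ⟨h1, h2, h3, h4⟩
      refine ⟨⟨by omega, by rwa [lab_pos u p (by omega)] at h3, fun x hx hx' => ?_⟩,
        by omega, by omega⟩
      have := h4 x (by omega) (by omega)
      rwa [lab_pos u x (by omega)] at this
    · rintro ⟨⟨h1, h2, h3⟩, h4, h5⟩
      refine ⟨by omega, by omega, by rwa [lab_pos u p (by omega)], fun x hx hx' => ?_⟩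
      lift x to ℕ using by omega
      rw [lab_pos u x (by omega)]
      exact h3 x (by omega) (by omega)
  | Y a =>
    simp only [Sel, Lst, stepI, prevOcc_iff]
    constructor
    · rintro ⟨h1, h2, h3, h4⟩
      refine ⟨⟨by omega, by omega, by rwa [lab_pos u p (by omega)] at h3, fun x hx hx' => ?_⟩,
        by omega, by omega⟩
      have := h4 x (by omega) (by omega)
      rwa [lab_pos u x (by omega)] at this
    · rintro ⟨⟨h0, h1, h2, h3⟩, h4, h5⟩
      refine ⟨by omega, by omega, by rwa [lab_pos u p (by omega)], fun x hx hx' => ?_⟩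
      lift x to ℕ using by omega
      rw [lab_pos u x (by omega)]
      exact h3 x (by omega) (by omega)

theorem stepI_bd (u : List A) (a b : A) (i j p q : ℕ) :
    (nextOcc u a i = some p → i < p) ∧ (prevOcc u b j = some q → q < j) :=
  ⟨fun h => ((nextOcc_iff _ _ _ _).1 h).1, fun h => ((prevOcc_iff _ _ _ _).1 h).2.1⟩

def Cg (u : List A) (r : List (RLetter A)) (i0 j0 : ℕ) : Prop :=
  ∃ (p : ℕ) (i j : ℕ → ℕ),
    evalFrom u r (if headX r then i0 else j0) = some p ∧
    i 0 = i0 ∧ j 0 = j0 ∧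
    (∀ ℓ z w, r[ℓ]? = some z → r[ℓ+1]? = some w → 
        ∃ q, stepI u z (i ℓ) (j ℓ) = some q ∧
          i (ℓ+1) = (if headX [w] then q else i ℓ) ∧ j (ℓ+1) = (if headX [w] then j ℓ else q)) ∧
    (∀ ℓ, ℓ + 1 < r.length →
        i ℓ ≤ i (ℓ+1) ∧ j (ℓ+1) ≤ j ℓ ∧ (i ℓ < i (ℓ+1) ∨ j (ℓ+1) < j ℓ)) ∧
    i (r.length - 1) < p ∧ p < j (r.length - 1)

theorem Condensed_iff_Cg (u : List A) (r : List (RLetter A)) (hr : r ≠ []) :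
    Condensed u r ↔ Cg u r 0 (u.length + 1) := by
  have he : evalR u r = evalFrom u r (if headX r then 0 else u.length + 1) := by
    match r with
    | .X a :: t => rfl
    | .Y a :: t => rfl
  unfold Condensed Cg
  rw [he]
  refine exists_congr fun p => exists_congr fun i => exists_congr fun j => ?_
  refine and_congr_right fun _ => and_congr_right fun _ => and_congr_right fun _ => ?_
  constructor
  · rintro ⟨h1, h2, h3, h4, h5, h6⟩
    refine ⟨?_, fun ℓ hl => h5 (ℓ+1) (by omega) hl, h6⟩
    intro ℓ z w hz hw
    cases z with
    | X a =>
      cases w with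
      | X b =>
        have := h1 (ℓ+1) a b (by omega) hz hw
        exact ⟨_, this.1, rfl, this.2⟩
      | Y b =>
        have := h3 (ℓ+1) a b (by omega) hz hw
        exact ⟨_, this.2, this.1, rfl⟩
    | Y a =>
      cases w with
      | X b =>
        have := h4 (ℓ+1) a b (by omega) hz hw
        exact ⟨_, this.1, rfl, this.2⟩
      | Y b =>
        have := h2 (ℓ+1) a b (by omega) hz hw
        exact ⟨_, this.2, this.1, rfl⟩
  · rintro ⟨h1, h5, h6⟩
    refine ⟨?_, ?_, ?_, ?_, ?_, h6⟩
    · intro ℓ a b hl hz hw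
      obtain ⟨ℓ, rfl⟩ : ∃ k, ℓ = k + 1 := ⟨ℓ - 1, by omega⟩
      obtain ⟨q, e1, e2, e3⟩ := h1 ℓ _ _ hz hw
      simp only [headX, if_true] at e2 e3
      exact ⟨by rw [e2]; exact e1, e3⟩
    · intro ℓ a b hl hz hw
      obtain ⟨ℓ, rfl⟩ : ∃ k, ℓ = k + 1 := ⟨ℓ - 1, by omega⟩
      obtain ⟨q, e1, e2, e3⟩ := h1 ℓ _ _ hz hw
      simp only [headX, Bool.false_eq_true, if_false] at e2 e3
      exact ⟨e2, by rw [e3]; exact e1⟩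
    · intro ℓ a b hl hz hw
      obtain ⟨ℓ, rfl⟩ : ∃ k, ℓ = k + 1 := ⟨ℓ - 1, by omega⟩
      obtain ⟨q, e1, e2, e3⟩ := h1 ℓ _ _ hz hw
      simp only [headX, Bool.false_eq_true, if_false] at e2 e3
      exact ⟨e2, by rw [e3]; exact e1⟩
    · intro ℓ a b hl hz hw
      obtain ⟨ℓ, rfl⟩ : ∃ k, ℓ = k + 1 := ⟨ℓ - 1, by omega⟩
      obtain ⟨q, e1, e2, e3⟩ := h1 ℓ _ _ hz hw
      simp only [headX, if_true] at e2 e3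
      exact ⟨by rw [e2]; exact e1, e3⟩
    · intro ℓ hl hl'
      obtain ⟨ℓ, rfl⟩ : ∃ k, ℓ = k + 1 := ⟨ℓ - 1, by omega⟩
      exact h5 ℓ hl'

theorem stepR_eq (u : List A) (z : RLetter A) (t : List (RLetter A)) (i j : ℕ) :
    stepR u z (if headX (z :: t) then i else j) = stepI u z i j := by
  cases z <;> rfl

omit [DecidableEq A] in
theorem headX_cons (w : RLetter A) (t : List (RLetter A)) : headX (w :: t) = headX [w] := by
  cases w <;> rfl

omit [DecidableEq A] in
theorem D_ne (f : ℤ → Option A) (r : List (RLetter A)) (i j : ℤ) (hr : r ≠ [])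
    (h : D f r i j) : i < j := by
  cases r with
  | nil => exact absurd rfl hr
  | cons z t =>
    obtain ⟨p, hp, -⟩ := h
    exact hp.bd.1.trans hp.bd.2

theorem stepI_bd' (u : List A) (z : RLetter A) (i j q : ℕ) (h : stepI u z i j = some q) :
    i < q ∨ q < j := by
  cases z with
  | X a => exact Or.inl ((nextOcc_iff _ _ _ _).1 h).1
  | Y a => exact Or.inr ((prevOcc_iff _ _ _ _).1 h).2.1

theorem Cg_iff_D (u : List A) (r : List (RLetter A)) : r ≠ [] → ∀ i0 j0 : ℕ,
    (Cg u r i0 j0 ↔ D (lab u) r i0 j0) := by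
  induction r with
  | nil => intro h; exact absurd rfl h
  | cons z t ih =>
    intro _ i0 j0
    cases t with
    | nil =>
      constructor
      · rintro ⟨p, i, j, h1, rfl, rfl, -, -, h2, h3⟩
        refine ⟨p, (Sel_iff u z _ _ p).2 ⟨?_, h2, h3⟩, trivial⟩
        rw [evalFrom, stepR_eq] at h1
        simpa [evalFrom] using h1
      · rintro ⟨p, hp, -⟩
        have := hp.bd
        lift p to ℕ using by omega
        rw [Sel_iff] at hp
        refine ⟨p, fun _ => i0, fun _ => j0, ?_, rfl, rfl, ?_, ?_, hp.2⟩
        · rw [evalFrom, stepR_eq, hp.1]; rfl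
        · intro ℓ z w h1 h2
          simp at h2
        · intro ℓ h; simp at h
    | cons w t =>
      have ih := ih (by simp)
      constructor
      · rintro ⟨p, i, j, h1, rfl, rfl, h2, h3, h4⟩
        obtain ⟨q, e1, e2, e3⟩ := h2 0 z w rfl rfl
        have hC : Cg u (w :: t) (i 1) (j 1) := by
          refine ⟨p, fun k => i (k+1), fun k => j (k+1), ?_, rfl, rfl, ?_, ?_, ?_⟩
          · rw [evalFrom, stepR_eq, e1] at h1
            simp only [zero_add] at e2 e3
            rw [headX_cons, e2, e3]
            have h1' : evalFrom u (w :: t) q = some p := h1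
            rw [← h1']
            congr 1
            split_ifs <;> rfl
          · intro ℓ z' w' hz hw
            exact h2 (ℓ+1) z' w' hz hw
          · intro ℓ hl
            exact h3 (ℓ+1) (by simpa using hl)
          · simpa using h4
        have hD := (ih _ _).1 hC
        have hlt := D_ne _ _ _ _ (by simp) hD
        have h0 := h3 0 (by simp)
        have hb := stepI_bd' _ _ _ _ _ e1
        simp only [zero_add] at e2 e3 h0
        refine ⟨q, (Sel_iff u z _ _ q).2 ⟨e1, ?_, ?_⟩, ?_⟩
        · split_ifs at e2 e3 <;> omega
        · split_ifs at e2 e3 <;> omega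
        · rw [e2, e3] at hD
          rw [headX_cons]
          convert hD using 1 <;> split_ifs <;> rfl
      · rintro ⟨q, hq, hd⟩
        have hb := hq.bd
        lift q to ℕ using by omega
        rw [Sel_iff] at hq
        have hC : Cg u (w :: t) (if headX [w] then q else i0) (if headX [w] then j0 else q) := by
          rw [ih]
          rw [headX_cons] at hd
          convert hd using 1 <;> split_ifs <;> rfl
        obtain ⟨p, i, j, h1, h2, h3, h4, h5, h6⟩ := hC
        refine ⟨p, fun k => if k = 0 then i0 else i (k-1), fun k => if k = 0 then j0 else j (k-1),
          ?_, rfl, rfl, ?_, ?_, ?_⟩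
        · rw [evalFrom, stepR_eq, hq.1]
          rw [headX_cons] at h1
          show evalFrom u (w :: t) q = some p
          rw [← h1]
          congr 1
          split_ifs <;> rfl
        · intro ℓ z' w' hz hw
          cases ℓ with
          | zero =>
            have hz' : z = z' := by simpa using hz
            have hw' : w = w' := by simpa using hw
            subst hz' hw'
            exact ⟨q, hq.1, by simpa using h2, by simpa using h3⟩
          | succ ℓ =>
            exact h4 ℓ z' w' hz hw
        · intro ℓ hl
          cases ℓ with
          | zero =>
            simp only [zero_add, if_true, one_ne_zero, if_false, Nat.sub_self]
            rw [h2, h3]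
            split_ifs <;> omega
          | succ ℓ =>
            exact h5 ℓ (by simpa using hl)
        · simpa using h6

theorem Condensed_iff (u : List A) (r : List (RLetter A)) (hr : r ≠ []) :
    Condensed u r ↔ D (lab u) r 0 ((u.length : ℤ) + 1) := by
  rw [Condensed_iff_Cg u r hr, Cg_iff_D u r hr]
  push_cast; rfl

omit [DecidableEq A] in
theorem uRX_ne {m n : ℕ} {r : List (RLetter A)} (h : uRX m n r) : r ≠ [] := by
  rintro rfl
  rw [uRX_iff, startsX_iff, startsY_iff] at h
  simp [headX] at h

omit [DecidableEq A] in
theorem uRY_ne {m n : ℕ} {r : List (RLetter A)} (h : uRY m n r) : r ≠ [] := by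
  rintro rfl
  rw [uRY_iff, startsX_iff, startsY_iff] at h
  simp [headX] at h

theorem trir_iff (m n : ℕ) (u v : List A) : trir m n u v ↔
    ∀ r, uRX m n r → (D (lab u) r 0 ((u.length : ℤ) + 1) ↔ D (lab v) r 0 ((v.length : ℤ) + 1)) := by
  refine forall_congr' fun r => forall_congr' fun hr => ?_
  rw [Condensed_iff _ _ (uRX_ne hr), Condensed_iff _ _ (uRX_ne hr)]

theorem tril_iff (m n : ℕ) (u v : List A) : tril m n u v ↔
    ∀ r, uRY m n r → (D (lab u) r 0 ((u.length : ℤ) + 1) ↔ D (lab v) r 0 ((v.length : ℤ) + 1)) := by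
  refine forall_congr' fun r => forall_congr' fun hr => ?_
  rw [Condensed_iff _ _ (uRY_ne hr), Condensed_iff _ _ (uRY_ne hr)]

omit [DecidableEq A] in
theorem lab_left (um up : List A) (a : A) (x : ℤ) (h0 : 0 < x) (h : x < (um.length : ℤ) + 1) :
    lab (um ++ a :: up) x = lab um x := by
  simp only [lab, h0, if_true]
  rw [List.getElem?_append_left (by omega)]

omit [DecidableEq A] in
theorem lab_right (um up : List A) (a : A) (x : ℤ) (h0 : 0 < x) :
    lab (um ++ a :: up) (x + ((um.length : ℤ) + 1)) = lab up x := by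
  simp only [lab, h0, if_true]
  rw [if_pos (by omega), List.getElem?_append_right (by omega)]
  have : (x + ((um.length : ℤ) + 1)).toNat - 1 - um.length = (x.toNat - 1) + 1 := by omega
  rw [this, List.getElem?_cons_succ]

omit [DecidableEq A] in
theorem lab_mid (um up : List A) (a : A) :
    lab (um ++ a :: up) ((um.length : ℤ) + 1) = some a := by
  have := lab_pos (um ++ a :: up) (um.length + 1) (by omega)
  push_cast at this
  rw [this]; simp

omit [DecidableEq A] in
theorem lab_mem (u : List A) (a : A) (x : ℤ) (h : lab u x = some a) : a ∈ u := by
  unfold lab at h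
  split_ifs at h
  exact List.mem_of_getElem? h

omit [DecidableEq A] in
theorem D_left (um up : List A) (a : A) (r : List (RLetter A)) :
    D (lab (um ++ a :: up)) r 0 ((um.length : ℤ) + 1) ↔ D (lab um) r 0 ((um.length : ℤ) + 1) := by
  have := D_shift_iff (lab (um ++ a :: up)) (lab um) 0 r 0 ((um.length : ℤ) + 1)
    (fun x h1 h2 => by rw [add_zero, lab_left _ _ _ _ h1 h2])
  simpa using this

omit [DecidableEq A] in
theorem D_right (um up : List A) (a : A) (r : List (RLetter A)) :
    D (lab (um ++ a :: up)) r ((um.length : ℤ) + 1) (((um ++ a :: up).length : ℤ) + 1) ↔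
      D (lab up) r 0 ((up.length : ℤ) + 1) := by
  have := D_shift_iff (lab up) (lab (um ++ a :: up)) ((um.length : ℤ) + 1) r 0
    ((up.length : ℤ) + 1) (fun x h1 h2 => by rw [lab_right _ _ _ _ h1])
  rw [this]
  have e : (((um ++ a :: up).length : ℤ) + 1) = (up.length : ℤ) + 1 + ((um.length : ℤ) + 1) := by
    simp only [List.length_append, List.length_cons]; push_cast; ring
  rw [e, zero_add]

omit [DecidableEq A] in
theorem Fst_fact (um up : List A) (a : A) (h : a ∉ um) :
    Fst (lab (um ++ a :: up)) 0 (((um ++ a :: up).length : ℤ) + 1) a ((um.length : ℤ) + 1) := by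
  refine ⟨by omega, ?_, lab_mid _ _ _, fun q h1 h2 h3 => ?_⟩
  · simp only [List.length_append, List.length_cons]; push_cast; omega
  · rw [lab_left _ _ _ _ h1 h2] at h3
    exact h (lab_mem _ _ _ h3)

omit [DecidableEq A] in
theorem Lst_fact (um up : List A) (a : A) (h : a ∉ up) :
    Lst (lab (um ++ a :: up)) 0 (((um ++ a :: up).length : ℤ) + 1) a ((um.length : ℤ) + 1) := by
  refine ⟨by omega, ?_, lab_mid _ _ _, fun q h1 h2 h3 => ?_⟩
  · simp only [List.length_append, List.length_cons]; push_cast; omega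
  · have := lab_right um up a (q - ((um.length : ℤ) + 1)) (by omega)
    rw [sub_add_cancel, h3] at this
    exact h (lab_mem _ _ _ this.symm)

/-- Behaviour of `⊳_{m,n}` and `⊲_{m,n}` under `a`-left and `a`-right
factorizations. -/
theorem statement4 (m n : ℕ) (hm : 2 ≤ m) (hmn : m ≤ n) (u v : List A) (a : A)
    (ha : alph u = alph v) (hau : a ∈ alph u) :
    (∀ um up vm vp : List A,
       u = um ++ a :: up → a ∉ um → v = vm ++ a :: vp → a ∉ vm →
       ((trir m n u v → (trir m (n-1) um vm ∧ (n = m → trir (m-1) (n-1) um vm))) ∧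
        (tril m n u v → (tril m (n-1) up vp ∧ (n = m → tril (m-1) (n-1) up vp))))) ∧
    (∀ um up vm vp : List A,
       u = um ++ a :: up → a ∉ up → v = vm ++ a :: vp → a ∉ vp →
       ((tril m n u v → (tril m (n-1) up vp ∧ (n = m → tril (m-1) (n-1) up vp))) ∧
        (trir m n u v → (trir m (n-1) um vm ∧ (n = m → trir (m-1) (n-1) um vm))))) := by
  have monoX : ∀ x y : List A, trir m (n-1) x y → trir (m-1) (n-1) x y :=
    fun x y h r hr => h r (uRX_mono _ _ _ hr)
  have monoY : ∀ x y : List A, tril m (n-1) x y → tril (m-1) (n-1) x y :=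
    fun x y h r hr => h r (uRY_mono _ _ _ hr)
  constructor
  · rintro um up vm vp rfl hu rfl hv
    have F := Fst_fact um up a hu
    have G := Fst_fact vm vp a hv
    constructor
    · intro H
      have K : trir m (n-1) um vm := by
        rw [trir_iff] at H ⊢
        have := agree1 m n hm hmn _ _ a _ _ _ _ _ _ F G H
        simpa only [D_left] using this
      exact ⟨K, fun _ => monoX _ _ K⟩
    · intro H
      have K : tril m (n-1) up vp := by
        rw [tril_iff] at H ⊢
        have := agree2 m n hm hmn _ _ a _ _ _ _ _ _ F G H
        simpa only [D_right] using this
      exact ⟨K, fun _ => monoY _ _ K⟩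
  · rintro um up vm vp rfl hu rfl hv
    have F := Lst_fact um up a hu
    have G := Lst_fact vm vp a hv
    constructor
    · intro H
      have K : tril m (n-1) up vp := by
        rw [tril_iff] at H ⊢
        have := agree3 m n hm hmn _ _ a _ _ _ _ _ _ F G H
        simpa only [D_right] using this
      exact ⟨K, fun _ => monoY _ _ K⟩
    · intro H
      have K : trir m (n-1) um vm := by
        rw [trir_iff] at H ⊢
        have := agree4 m n hm hmn _ _ a _ _ _ _ _ _ F G H
        simpa only [D_left] using this
      exact ⟨K, fun _ => monoX _ _ K⟩

end RankerPaper
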